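/- For every integer t with t ≥ 1 and t ≠ 3, the polynomial f_t^{(4)}(x) = x^4 − t x^3 − 6 x^2 + t x + 1 has four distinct real roots α_1, α_2, α_3, α_4, and these roots satisfy min_{i≠j} |α_i − α_j| > 0.8284 and min_i ∏_{j≠i} |α_j − α_i| > 4.6114. -/

import Mathlib

/-!
The substitution `x ↦ (x - 1) / (x + 1)` permutes the roots of
`x ^ 4 - t x ^ 3 - 6 x ^ 2 + t x + 1` cyclically, so a single root `a > 1` yields all four:
`-(a + 1) / (a - 1) < -1 / a < (a - 1) / (a + 1) < a`.
All differences are `a ^ 2 + 1` times an elementary factor, and the estimates become polynomial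
inequalities in `a`. The largest root increases with `t` and exceeds `2.9057` for `t = 1`
(`exists_large_root`). The binding estimates are those around `-1 / a`:
the gap `(a ^ 2 + 1) / (a (a + 1))` and the product `(a ^ 2 + 1) ^ 3 / (a ^ 3 (a ^ 2 - 1))`,
which is increasing on `a ≥ 2.9057` and already larger than `4.6114` at `a = 2.9057`.
-/

/-- The bound `2.9057` lies just below the largest root at `t = 1`, which is `2.90570…`. -/
lemma exists_large_root (t : ℝ) (ht : 1 ≤ t) :
    ∃ a : ℝ, 2.9057 ≤ a ∧ a ^ 4 - t * a ^ 3 - 6 * a ^ 2 + t * a + 1 = 0 := by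
  have hc : ContinuousOn (fun x : ℝ => x ^ 4 - t * x ^ 3 - 6 * x ^ 2 + t * x + 1)
      (Set.Icc 2.9057 (t + 6)) := by fun_prop
  have hle : (2.9057 : ℝ) ≤ t + 6 := by linarith
  obtain ⟨a, ha, h⟩ := intermediate_value_Icc hle hc (show (0 : ℝ) ∈ Set.Icc _ _ by
    constructor
    · norm_num
      linarith
    · have : (t + 6) ^ 4 - t * (t + 6) ^ 3 - 6 * (t + 6) ^ 2 + t * (t + 6) + 1
          = 6 * (t + 6) ^ 2 * (t + 5) + t * (t + 6) + 1 := by ring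
      simp only [this]
      positivity)
  exact ⟨a, ha.1, h⟩

/-- The product of the distances from `-1 / a` to the other roots exceeds `4.6114`,
with denominators cleared. -/
lemma key_ineq (a : ℝ) (ha : 2.9057 ≤ a) :
    4.6114 * (a ^ 3 * ((a + 1) * (a - 1))) < (a ^ 2 + 1) ^ 3 := by
  obtain ⟨e, rfl⟩ : ∃ e, a = 2.9057 + e := ⟨a - 2.9057, by ring⟩
  have he : 0 ≤ e := by linarith
  -- Expanded around `2.9057`, the difference of the two sides has nonnegative coefficients.
  rw [← sub_pos]
  ring_nf
  positivity

set_option maxHeartbeats 1600000 in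
/-- For `t ≥ 1`, `t ≠ 3`, the simplest quartic polynomial
`f_t^{(4)}(x) = x^4 - t x^3 - 6x^2 + t x + 1` has four distinct real roots, whose minimal
mutual distance exceeds `0.8284` and such that `min_i ∏_{j ≠ i} |α_j - α_i| > 4.6114`. -/
theorem simplest_quartic_roots_all_t (t : ℤ) (ht1 : 1 ≤ t) (ht3 : t ≠ 3) :
    ∃ α : Fin 4 → ℝ, Function.Injective α ∧
      (∀ i, (α i) ^ 4 - (t : ℝ) * (α i) ^ 3 - 6 * (α i) ^ 2 + (t : ℝ) * (α i) + 1 = 0) ∧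
      (∀ i j, i ≠ j → 0.8284 < |α i - α j|) ∧
      (∀ i, 4.6114 < ∏ j ∈ Finset.univ.erase i, |α j - α i|) := by
  obtain ⟨a, ha, h⟩ := exists_large_root t (by exact_mod_cast ht1)
  generalize (t : ℝ) = s at h ⊢
  have h0 : 0 < a := by linarith
  have hp : 0 < a + 1 := by linarith
  have hm : 0 < a - 1 := by linarith
  have h0' := h0.ne'
  have hp' := hp.ne'
  have hm' := hm.ne'
  obtain ⟨b, hb⟩ : ∃ b, b = (a - 1) / (a + 1) := ⟨_, rfl⟩
  obtain ⟨c, hc⟩ : ∃ c, c = -1 / a := ⟨_, rfl⟩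
  obtain ⟨d, hd⟩ : ∃ d, d = -(a + 1) / (a - 1) := ⟨_, rfl⟩
  have fb : b ^ 4 - s * b ^ 3 - 6 * b ^ 2 + s * b + 1 = 0 := by
    rw [hb]; field_simp; linear_combination (-4) * h
  have fc : c ^ 4 - s * c ^ 3 - 6 * c ^ 2 + s * c + 1 = 0 := by
    rw [hc]; field_simp; linear_combination h
  have fd : d ^ 4 - s * d ^ 3 - 6 * d ^ 2 + s * d + 1 = 0 := by
    rw [hd]; field_simp; linear_combination (-4) * h
  have hab : a - b = (a ^ 2 + 1) / (a + 1) := by rw [hb]; field_simp; ring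
  have hac : a - c = (a ^ 2 + 1) / a := by rw [hc]; field_simp; ring
  have had : a - d = (a ^ 2 + 1) / (a - 1) := by rw [hd]; field_simp; ring
  have hbc : b - c = (a ^ 2 + 1) / (a * (a + 1)) := by rw [hb, hc]; field_simp; ring
  have hbd : b - d = 2 * (a ^ 2 + 1) / ((a + 1) * (a - 1)) := by rw [hb, hd]; field_simp; ring
  have hcd : c - d = (a ^ 2 + 1) / (a * (a - 1)) := by rw [hc, hd]; field_simp; ring
  have gab : 0.8284 < a - b := by rw [hab, lt_div_iff₀ (by positivity)]; nlinarith
  have gbc : 0.8284 < b - c := by rw [hbc, lt_div_iff₀ (by positivity)]; nlinarith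
  have gcd : 0.8284 < c - d := by rw [hcd, lt_div_iff₀ (by positivity)]; nlinarith
  have key := key_ineq a ha
  have pc : 4.6114 < (a - c) * (b - c) * (c - d) := by
    have : (a - c) * (b - c) * (c - d) = (a ^ 2 + 1) ^ 3 / (a ^ 3 * ((a + 1) * (a - 1))) := by
      rw [hac, hbc, hcd]; field_simp
    rwa [this, lt_div_iff₀ (by positivity)]
  have pa : 4.6114 < (a - b) * (a - c) * (a - d) := by
    have e1 : b - c ≤ a - b := by
      rw [hab, hbc]; gcongr; nlinarith
    have e2 : c - d ≤ a - d := by linarith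
    refine pc.trans_le ?_
    rw [mul_comm (a - b)]
    have : 0 ≤ a - c := by linarith
    have : 0 ≤ a - b := by linarith
    have : 0 ≤ c - d := by linarith
    gcongr
  have pb : 4.6114 < (a - b) * (b - c) * (b - d) := by
    have : (a - b) * (b - c) * (b - d)
        = 2 * (a ^ 2 + 1) ^ 3 / (a * (a + 1) ^ 3 * (a - 1)) := by
      rw [hab, hbc, hbd]; field_simp
    rw [this, lt_div_iff₀ (by positivity)]
    -- Reduces to `key` since `(a + 1) ^ 2 ≤ 2 * a ^ 2`.
    have e : 0 ≤ (2 * a ^ 2 - (a + 1) ^ 2) * (a * ((a + 1) * (a - 1))) := by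
      refine mul_nonneg ?_ (by positivity)
      nlinarith
    linear_combination 2 * key + 4.6114 * e
  have pd : 4.6114 < (a - d) * (b - d) * (c - d) := by
    refine pc.trans_le ?_
    have : 0 ≤ a - d := by linarith
    have : 0 ≤ b - c := by linarith
    have : 0 ≤ c - d := by linarith
    gcongr <;> linarith
  have sep : ∀ i j, i ≠ j → 0.8284 < |(![d, c, b, a] : Fin 4 → ℝ) i - ![d, c, b, a] j| := by
    intro i j hij
    fin_cases i <;> fin_cases j <;> simp at hij ⊢ <;> rw [lt_abs] <;>
      first
      | (left; linarith)
      | (right; linarith)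
  have aab : |a - b| = a - b := abs_of_pos (by linarith)
  have aac : |a - c| = a - c := abs_of_pos (by linarith)
  have aad : |a - d| = a - d := abs_of_pos (by linarith)
  have abc : |b - c| = b - c := abs_of_pos (by linarith)
  have abd : |b - d| = b - d := abs_of_pos (by linarith)
  have acd : |c - d| = c - d := abs_of_pos (by linarith)
  refine ⟨![d, c, b, a], ?_, ?_, sep, ?_⟩
  · intro i j hij
    by_contra hne
    have := sep i j hne
    rw [hij, sub_self, abs_zero] at this
    norm_num at this
  · intro i
    fin_cases i
    · exact fd
    · exact fc
    · exact fb
    · exact h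
  · intro i
    -- Rewrite the product over `j ≠ i` as four explicit factors, the one at `i` being `1`.
    rw [← Finset.filter_ne', Finset.prod_filter, Fin.prod_univ_four]
    fin_cases i
    · simp [aad, abd, acd]
      linarith
    · simp [aac, abc, abs_sub_comm d c, acd]
      linarith
    · simp [aab, abs_sub_comm c b, abs_sub_comm d b, abc, abd]
      linarith
    · simp [abs_sub_comm b a, abs_sub_comm c a, abs_sub_comm d a, aab, aac, aad]
      linarith
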